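/- arXiv:math/0411140 — 2 statements merged into one kernel-verified Lean document; each statement's English description precedes it below -/
import Mathlib

section
/- Every positive integer belongs to the 3x+1 semigroup S. -/
def collatzGens : Set ℚ := {2} ∪ {q : ℚ | ∃ k : ℕ, q = (2 * k + 1) / (3 * k + 2)}

def collatzSemigroup : Subsemigroup ℚ := Subsemigroup.closure collatzGens

set_option synthInstance.maxHeartbeats 400000 in
set_option synthInstance.maxSize 100000 in
/-- Every `n` prime to `6` other than `1, 7, 11` has a multiple `c * n` whose image under
`m ↦ 3 * m + 1` splits, up to powers of two, into factors smaller than `n`. -/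
theorem exists_forward_factorization {n : ℕ} (hn : n % 6 = 1 ∨ n % 6 = 5) (h1 : n ≠ 1)
    (h7 : n ≠ 7) (h11 : n ≠ 11) :
    ∃ k x y c : ℕ, 3 * (c * n) + 1 = 2 ^ k * (x * y) ∧
      0 < x ∧ x < n ∧ 0 < y ∧ y < n ∧ c < n ∧ (c % 6 = 1 ∨ c % 6 = 5) := by
  have residues : ∀ a < 27, ∀ b < 48, (48 * a + b) % 6 = 1 ∨ (48 * a + b) % 6 = 5 →
      (48 * a + b) % 12 = 1 ∨ (48 * a + b) % 12 = 5 ∨ (48 * a + b) % 36 = 19 ∨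
      (48 * a + b) % 36 = 23 ∨ (48 * a + b) % 36 = 31 ∨ (48 * a + b) % 36 = 35 ∨
      (48 * a + b) % 72 = 47 ∨ (48 * a + b) % 108 = 43 ∨ (48 * a + b) % 108 = 79 ∨
      (48 * a + b) % 216 = 83 ∨ (48 * a + b) % 216 = 155 ∨ (48 * a + b) % 324 = 7 ∨
      (48 * a + b) % 324 = 115 ∨ (48 * a + b) % 324 = 223 ∨ (48 * a + b) % 432 = 11 ∨
      (48 * a + b) % 432 = 227 := by
    decide +kernel
  have cover := residues (n % 1296 / 48) (by omega) (n % 1296 % 48) (by omega)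
  rw [Nat.div_add_mod] at cover
  simp (disch := decide) only [Nat.mod_mod_of_dvd] at cover
  replace cover := cover hn
  rcases cover with h | h | h | h | h | h | h | h | h | h | h | h | h | h | h | h
  · obtain ⟨t, rfl⟩ : ∃ t, n = 12 * t + 13 := ⟨n / 12 - 1, by omega⟩
    exact ⟨0, 4, 9 * t + 10, 1, by ring, by omega⟩
  · obtain ⟨t, rfl⟩ : ∃ t, n = 12 * t + 5 := ⟨n / 12, by omega⟩
    exact ⟨0, 4, 9 * t + 4, 1, by ring, by omega⟩
  · obtain ⟨t, rfl⟩ : ∃ t, n = 36 * t + 19 := ⟨n / 36, by omega⟩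
    exact ⟨2, 18 * t + 10, 18 * t + 10, 12 * t + 7, by ring, by omega⟩
  · obtain ⟨t, rfl⟩ : ∃ t, n = 36 * t + 23 := ⟨n / 36, by omega⟩
    exact ⟨0, 36 * t + 22, 36 * t + 22, 12 * t + 7, by ring, by omega⟩
  · obtain ⟨t, rfl⟩ : ∃ t, n = 36 * t + 31 := ⟨n / 36, by omega⟩
    exact ⟨2, 18 * t + 16, 18 * t + 16, 12 * t + 11, by ring, by omega⟩
  · obtain ⟨t, rfl⟩ : ∃ t, n = 36 * t + 35 := ⟨n / 36, by omega⟩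
    exact ⟨0, 36 * t + 34, 36 * t + 34, 12 * t + 11, by ring, by omega⟩
  · obtain ⟨t, rfl⟩ : ∃ t, n = 72 * t + 47 := ⟨n / 72, by omega⟩
    exact ⟨1, 72 * t + 43, 63 * t + 41, 42 * t + 25, by ring, by omega⟩
  · obtain ⟨t, rfl⟩ : ∃ t, n = 108 * t + 43 := ⟨n / 108, by omega⟩
    exact ⟨2, 108 * t + 40, 63 * t + 25, 84 * t + 31, by ring, by omega⟩
  · obtain ⟨t, rfl⟩ : ∃ t, n = 108 * t + 79 := ⟨n / 108, by omega⟩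
    exact ⟨2, 108 * t + 76, 63 * t + 46, 84 * t + 59, by ring, by omega⟩
  · obtain ⟨t, rfl⟩ : ∃ t, n = 216 * t + 83 := ⟨n / 216, by omega⟩
    exact ⟨0, 144 * t + 58, 189 * t + 73, 42 * t + 17, by ring, by omega⟩
  · obtain ⟨t, rfl⟩ : ∃ t, n = 216 * t + 155 := ⟨n / 216, by omega⟩
    exact ⟨0, 144 * t + 106, 189 * t + 136, 42 * t + 31, by ring, by omega⟩
  · obtain ⟨t, rfl⟩ : ∃ t, n = 324 * t + 331 := ⟨n / 324 - 1, by omega⟩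
    exact ⟨1, 324 * t + 322, 234 * t + 239, 156 * t + 155, by ring, by omega⟩
  · obtain ⟨t, rfl⟩ : ∃ t, n = 324 * t + 115 := ⟨n / 324, by omega⟩
    exact ⟨1, 180 * t + 64, 162 * t + 62, 60 * t + 23, by ring, by omega⟩
  · obtain ⟨t, rfl⟩ : ∃ t, n = 324 * t + 223 := ⟨n / 324, by omega⟩
    exact ⟨1, 324 * t + 214, 234 * t + 161, 156 * t + 103, by ring, by omega⟩
  · obtain ⟨t, rfl⟩ : ∃ t, n = 432 * t + 443 := ⟨n / 432 - 1, by omega⟩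
    exact ⟨2, 432 * t + 431, 315 * t + 323, 420 * t + 419, by ring, by omega⟩
  · obtain ⟨t, rfl⟩ : ∃ t, n = 432 * t + 227 := ⟨n / 432, by omega⟩
    exact ⟨0, 432 * t + 203, 198 * t + 104, 66 * t + 31, by ring, by omega⟩

set_option synthInstance.maxHeartbeats 400000 in
set_option synthInstance.maxSize 100000 in
/-- Every `n` prime to `6` other than `1, 5, 7, 13, 23` has an even multiple `2 * (c * n)` of the form
`3 * m + 1`, where `m` is a product of two factors prime to `6` and smaller than `n`. -/
theorem exists_backward_factorization {n : ℕ} (hn : n % 6 = 1 ∨ n % 6 = 5) (h1 : n ≠ 1)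
    (h5 : n ≠ 5) (h7 : n ≠ 7) (h13 : n ≠ 13) (h23 : n ≠ 23) :
    ∃ x y c : ℕ, 2 * (c * n) = 3 * (x * y) + 1 ∧ x < n ∧ (x % 6 = 1 ∨ x % 6 = 5) ∧
      y < n ∧ (y % 6 = 1 ∨ y % 6 = 5) ∧ 0 < c ∧ c < n := by
  have residues : ∀ a < 81, ∀ b < 96, (96 * a + b) % 6 = 1 ∨ (96 * a + b) % 6 = 5 →
      (96 * a + b) % 18 = 11 ∨ (96 * a + b) % 18 = 17 ∨ (96 * a + b) % 72 = 1 ∨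
      (96 * a + b) % 72 = 19 ∨ (96 * a + b) % 72 = 43 ∨ (96 * a + b) % 72 = 59 ∨
      (96 * a + b) % 108 = 25 ∨ (96 * a + b) % 108 = 31 ∨ (96 * a + b) % 108 = 41 ∨
      (96 * a + b) % 108 = 61 ∨ (96 * a + b) % 108 = 67 ∨ (96 * a + b) % 108 = 77 ∨
      (96 * a + b) % 108 = 97 ∨ (96 * a + b) % 144 = 37 ∨ (96 * a + b) % 144 = 85 ∨
      (96 * a + b) % 216 = 5 ∨ (96 * a + b) % 216 = 7 ∨ (96 * a + b) % 216 = 49 ∨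
      (96 * a + b) % 216 = 55 ∨ (96 * a + b) % 216 = 79 ∨ (96 * a + b) % 216 = 95 ∨
      (96 * a + b) % 216 = 121 ∨ (96 * a + b) % 216 = 127 ∨ (96 * a + b) % 216 = 167 ∨
      (96 * a + b) % 216 = 193 ∨ (96 * a + b) % 324 = 211 ∨ (96 * a + b) % 324 = 319 ∨
      (96 * a + b) % 432 = 109 ∨ (96 * a + b) % 432 = 113 ∨ (96 * a + b) % 432 = 199 ∨
      (96 * a + b) % 432 = 253 ∨ (96 * a + b) % 432 = 367 ∨ (96 * a + b) % 432 = 397 ∨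
      (96 * a + b) % 432 = 415 ∨ (96 * a + b) % 648 = 23 ∨ (96 * a + b) % 648 = 239 ∨
      (96 * a + b) % 648 = 455 ∨ (96 * a + b) % 864 = 329 ∨ (96 * a + b) % 864 = 761 ∨
      (96 * a + b) % 972 = 103 ∨ (96 * a + b) % 972 = 427 ∨ (96 * a + b) % 972 = 751 ∨
      (96 * a + b) % 1296 = 13 ∨ (96 * a + b) % 1296 = 151 ∨ (96 * a + b) % 1296 = 157 ∨
      (96 * a + b) % 1296 = 301 ∨ (96 * a + b) % 1296 = 445 ∨ (96 * a + b) % 1296 = 583 ∨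
      (96 * a + b) % 1296 = 589 ∨ (96 * a + b) % 1296 = 733 ∨ (96 * a + b) % 1296 = 877 ∨
      (96 * a + b) % 1296 = 1015 ∨ (96 * a + b) % 1296 = 1021 ∨ (96 * a + b) % 1296 = 1165 := by
    decide +kernel
  have cover := residues (n % 7776 / 96) (by omega) (n % 7776 % 96) (by omega)
  rw [Nat.div_add_mod] at cover
  simp (disch := decide) only [Nat.mod_mod_of_dvd] at cover
  replace cover := cover hn
  rcases cover with h | h | h | h | h | h | h | h | h | h | h | h | h | h | h | h | h | h | h | h |
    h | h | h | h | h | h | h | h | h | h | h | h | h | h | h | h | h | h | h | h |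
    h | h | h | h | h | h | h | h | h | h | h | h | h | h
  · obtain ⟨t, rfl⟩ : ∃ t, n = 18 * t + 11 := ⟨n / 18, by omega⟩
    exact ⟨1, 12 * t + 7, 1, by ring, by omega⟩
  · obtain ⟨t, rfl⟩ : ∃ t, n = 18 * t + 17 := ⟨n / 18, by omega⟩
    exact ⟨1, 12 * t + 11, 1, by ring, by omega⟩
  · obtain ⟨t, rfl⟩ : ∃ t, n = 72 * t + 73 := ⟨n / 72 - 1, by omega⟩
    exact ⟨24 * t + 23, 54 * t + 55, 27 * t + 26, by ring, by omega⟩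
  · obtain ⟨t, rfl⟩ : ∃ t, n = 72 * t + 19 := ⟨n / 72, by omega⟩
    exact ⟨24 * t + 5, 18 * t + 5, 9 * t + 2, by ring, by omega⟩
  · obtain ⟨t, rfl⟩ : ∃ t, n = 72 * t + 43 := ⟨n / 72, by omega⟩
    exact ⟨24 * t + 13, 18 * t + 11, 9 * t + 5, by ring, by omega⟩
  · obtain ⟨t, rfl⟩ : ∃ t, n = 72 * t + 59 := ⟨n / 72, by omega⟩
    exact ⟨72 * t + 55, 6 * t + 5, 9 * t + 7, by ring, by omega⟩
  · obtain ⟨t, rfl⟩ : ∃ t, n = 108 * t + 25 := ⟨n / 108, by omega⟩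
    exact ⟨108 * t + 19, 30 * t + 7, 45 * t + 8, by ring, by omega⟩
  · obtain ⟨t, rfl⟩ : ∃ t, n = 108 * t + 31 := ⟨n / 108, by omega⟩
    exact ⟨108 * t + 25, 66 * t + 19, 99 * t + 23, by ring, by omega⟩
  · obtain ⟨t, rfl⟩ : ∃ t, n = 108 * t + 41 := ⟨n / 108, by omega⟩
    exact ⟨60 * t + 23, 54 * t + 19, 45 * t + 16, by ring, by omega⟩
  · obtain ⟨t, rfl⟩ : ∃ t, n = 108 * t + 61 := ⟨n / 108, by omega⟩
    exact ⟨108 * t + 55, 30 * t + 17, 45 * t + 23, by ring, by omega⟩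
  · obtain ⟨t, rfl⟩ : ∃ t, n = 108 * t + 67 := ⟨n / 108, by omega⟩
    exact ⟨108 * t + 61, 66 * t + 41, 99 * t + 56, by ring, by omega⟩
  · obtain ⟨t, rfl⟩ : ∃ t, n = 108 * t + 77 := ⟨n / 108, by omega⟩
    exact ⟨60 * t + 43, 54 * t + 37, 45 * t + 31, by ring, by omega⟩
  · obtain ⟨t, rfl⟩ : ∃ t, n = 108 * t + 97 := ⟨n / 108, by omega⟩
    exact ⟨12 * t + 11, 54 * t + 47, 9 * t + 8, by ring, by omega⟩
  · obtain ⟨t, rfl⟩ : ∃ t, n = 144 * t + 37 := ⟨n / 144, by omega⟩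
    exact ⟨144 * t + 29, 66 * t + 17, 99 * t + 20, by ring, by omega⟩
  · obtain ⟨t, rfl⟩ : ∃ t, n = 144 * t + 85 := ⟨n / 144, by omega⟩
    exact ⟨48 * t + 31, 90 * t + 53, 45 * t + 29, by ring, by omega⟩
  · obtain ⟨t, rfl⟩ : ∃ t, n = 216 * t + 221 := ⟨n / 216 - 1, by omega⟩
    exact ⟨216 * t + 209, 42 * t + 43, 63 * t + 61, by ring, by omega⟩
  · obtain ⟨t, rfl⟩ : ∃ t, n = 216 * t + 223 := ⟨n / 216 - 1, by omega⟩
    exact ⟨216 * t + 211, 30 * t + 31, 45 * t + 44, by ring, by omega⟩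
  · obtain ⟨t, rfl⟩ : ∃ t, n = 216 * t + 49 := ⟨n / 216, by omega⟩
    exact ⟨24 * t + 5, 54 * t + 13, 9 * t + 2, by ring, by omega⟩
  · obtain ⟨t, rfl⟩ : ∃ t, n = 216 * t + 55 := ⟨n / 216, by omega⟩
    exact ⟨120 * t + 31, 54 * t + 13, 45 * t + 11, by ring, by omega⟩
  · obtain ⟨t, rfl⟩ : ∃ t, n = 216 * t + 79 := ⟨n / 216, by omega⟩
    exact ⟨216 * t + 67, 30 * t + 11, 45 * t + 14, by ring, by omega⟩
  · obtain ⟨t, rfl⟩ : ∃ t, n = 216 * t + 95 := ⟨n / 216, by omega⟩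
    exact ⟨216 * t + 89, 84 * t + 37, 126 * t + 52, by ring, by omega⟩
  · obtain ⟨t, rfl⟩ : ∃ t, n = 216 * t + 121 := ⟨n / 216, by omega⟩
    exact ⟨216 * t + 109, 66 * t + 37, 99 * t + 50, by ring, by omega⟩
  · obtain ⟨t, rfl⟩ : ∃ t, n = 216 * t + 127 := ⟨n / 216, by omega⟩
    exact ⟨120 * t + 71, 54 * t + 31, 45 * t + 26, by ring, by omega⟩
  · obtain ⟨t, rfl⟩ : ∃ t, n = 216 * t + 167 := ⟨n / 216, by omega⟩
    exact ⟨216 * t + 161, 84 * t + 65, 126 * t + 94, by ring, by omega⟩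
  · obtain ⟨t, rfl⟩ : ∃ t, n = 216 * t + 193 := ⟨n / 216, by omega⟩
    exact ⟨216 * t + 181, 66 * t + 59, 99 * t + 83, by ring, by omega⟩
  · obtain ⟨t, rfl⟩ : ∃ t, n = 324 * t + 211 := ⟨n / 324, by omega⟩
    exact ⟨324 * t + 193, 66 * t + 43, 99 * t + 59, by ring, by omega⟩
  · obtain ⟨t, rfl⟩ : ∃ t, n = 324 * t + 319 := ⟨n / 324, by omega⟩
    exact ⟨324 * t + 301, 66 * t + 65, 99 * t + 92, by ring, by omega⟩
  · obtain ⟨t, rfl⟩ : ∃ t, n = 432 * t + 109 := ⟨n / 432, by omega⟩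
    exact ⟨432 * t + 85, 210 * t + 53, 315 * t + 62, by ring, by omega⟩
  · obtain ⟨t, rfl⟩ : ∃ t, n = 432 * t + 113 := ⟨n / 432, by omega⟩
    exact ⟨432 * t + 89, 42 * t + 11, 63 * t + 13, by ring, by omega⟩
  · obtain ⟨t, rfl⟩ : ∃ t, n = 432 * t + 199 := ⟨n / 432, by omega⟩
    exact ⟨432 * t + 175, 102 * t + 47, 153 * t + 62, by ring, by omega⟩
  · obtain ⟨t, rfl⟩ : ∃ t, n = 432 * t + 253 := ⟨n / 432, by omega⟩
    exact ⟨336 * t + 197, 216 * t + 125, 252 * t + 146, by ring, by omega⟩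
  · obtain ⟨t, rfl⟩ : ∃ t, n = 432 * t + 367 := ⟨n / 432, by omega⟩
    exact ⟨432 * t + 343, 246 * t + 209, 369 * t + 293, by ring, by omega⟩
  · obtain ⟨t, rfl⟩ : ∃ t, n = 432 * t + 397 := ⟨n / 432, by omega⟩
    exact ⟨432 * t + 373, 210 * t + 193, 315 * t + 272, by ring, by omega⟩
  · obtain ⟨t, rfl⟩ : ∃ t, n = 432 * t + 415 := ⟨n / 432, by omega⟩
    exact ⟨48 * t + 47, 270 * t + 259, 45 * t + 44, by ring, by omega⟩
  · obtain ⟨t, rfl⟩ : ∃ t, n = 648 * t + 671 := ⟨n / 648 - 1, by omega⟩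
    exact ⟨648 * t + 635, 366 * t + 379, 549 * t + 538, by ring, by omega⟩
  · obtain ⟨t, rfl⟩ : ∃ t, n = 648 * t + 239 := ⟨n / 648, by omega⟩
    exact ⟨648 * t + 221, 84 * t + 31, 126 * t + 43, by ring, by omega⟩
  · obtain ⟨t, rfl⟩ : ∃ t, n = 648 * t + 455 := ⟨n / 648, by omega⟩
    exact ⟨648 * t + 437, 84 * t + 59, 126 * t + 85, by ring, by omega⟩
  · obtain ⟨t, rfl⟩ : ∃ t, n = 864 * t + 329 := ⟨n / 864, by omega⟩
    exact ⟨288 * t + 115, 486 * t + 185, 243 * t + 97, by ring, by omega⟩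
  · obtain ⟨t, rfl⟩ : ∃ t, n = 864 * t + 761 := ⟨n / 864, by omega⟩
    exact ⟨864 * t + 713, 42 * t + 37, 63 * t + 52, by ring, by omega⟩
  · obtain ⟨t, rfl⟩ : ∃ t, n = 972 * t + 103 := ⟨n / 972, by omega⟩
    exact ⟨972 * t + 49, 66 * t + 7, 99 * t + 5, by ring, by omega⟩
  · obtain ⟨t, rfl⟩ : ∃ t, n = 972 * t + 427 := ⟨n / 972, by omega⟩
    exact ⟨972 * t + 373, 66 * t + 29, 99 * t + 38, by ring, by omega⟩
  · obtain ⟨t, rfl⟩ : ∃ t, n = 972 * t + 751 := ⟨n / 972, by omega⟩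
    exact ⟨708 * t + 547, 486 * t + 389, 531 * t + 425, by ring, by omega⟩
  · obtain ⟨t, rfl⟩ : ∃ t, n = 1296 * t + 1309 := ⟨n / 1296 - 1, by omega⟩
    exact ⟨1296 * t + 1291, 696 * t + 703, 1044 * t + 1040, by ring, by omega⟩
  · obtain ⟨t, rfl⟩ : ∃ t, n = 1296 * t + 151 := ⟨n / 1296, by omega⟩
    exact ⟨1296 * t + 115, 60 * t + 7, 90 * t + 8, by ring, by omega⟩
  · obtain ⟨t, rfl⟩ : ∃ t, n = 1296 * t + 157 := ⟨n / 1296, by omega⟩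
    exact ⟨240 * t + 29, 648 * t + 83, 180 * t + 23, by ring, by omega⟩
  · obtain ⟨t, rfl⟩ : ∃ t, n = 1296 * t + 301 := ⟨n / 1296, by omega⟩
    exact ⟨1296 * t + 265, 564 * t + 131, 846 * t + 173, by ring, by omega⟩
  · obtain ⟨t, rfl⟩ : ∃ t, n = 1296 * t + 445 := ⟨n / 1296, by omega⟩
    exact ⟨1296 * t + 427, 696 * t + 239, 1044 * t + 344, by ring, by omega⟩
  · obtain ⟨t, rfl⟩ : ∃ t, n = 1296 * t + 583 := ⟨n / 1296, by omega⟩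
    exact ⟨1296 * t + 511, 678 * t + 305, 1017 * t + 401, by ring, by omega⟩
  · obtain ⟨t, rfl⟩ : ∃ t, n = 1296 * t + 589 := ⟨n / 1296, by omega⟩
    exact ⟨240 * t + 109, 648 * t + 299, 180 * t + 83, by ring, by omega⟩
  · obtain ⟨t, rfl⟩ : ∃ t, n = 1296 * t + 733 := ⟨n / 1296, by omega⟩
    exact ⟨1296 * t + 697, 564 * t + 319, 846 * t + 455, by ring, by omega⟩
  · obtain ⟨t, rfl⟩ : ∃ t, n = 1296 * t + 877 := ⟨n / 1296, by omega⟩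
    exact ⟨1296 * t + 805, 498 * t + 337, 747 * t + 464, by ring, by omega⟩
  · obtain ⟨t, rfl⟩ : ∃ t, n = 1296 * t + 1015 := ⟨n / 1296, by omega⟩
    exact ⟨1296 * t + 979, 60 * t + 47, 90 * t + 68, by ring, by omega⟩
  · obtain ⟨t, rfl⟩ : ∃ t, n = 1296 * t + 1021 := ⟨n / 1296, by omega⟩
    exact ⟨816 * t + 643, 324 * t + 253, 306 * t + 239, by ring, by omega⟩
  · obtain ⟨t, rfl⟩ : ∃ t, n = 1296 * t + 1165 := ⟨n / 1296, by omega⟩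
    exact ⟨1200 * t + 1079, 810 * t + 727, 1125 * t + 1010, by ring, by omega⟩

theorem two_mem_collatzSemigroup : (2 : ℚ) ∈ collatzSemigroup :=
  Subsemigroup.subset_closure (Or.inl rfl)

theorem inv_two_mem_collatzSemigroup : (2 : ℚ)⁻¹ ∈ collatzSemigroup :=
  Subsemigroup.subset_closure (Or.inr ⟨0, by norm_num⟩)

theorem one_mem_collatzSemigroup : (1 : ℚ) ∈ collatzSemigroup := by
  simpa using mul_mem two_mem_collatzSemigroup inv_two_mem_collatzSemigroup

theorem two_pow_mem_collatzSemigroup (k : ℕ) : (2 : ℚ) ^ k ∈ collatzSemigroup := by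
  induction k with
  | zero => simpa using one_mem_collatzSemigroup
  | succ k ih => exact pow_succ (2 : ℚ) k ▸ mul_mem ih two_mem_collatzSemigroup

theorem odd_div_mem_collatzSemigroup {m : ℕ} (hm : m % 2 = 1) :
    (m : ℚ) / (3 * m + 1) ∈ collatzSemigroup := by
  obtain ⟨k, rfl⟩ : ∃ k, m = 2 * k + 1 := ⟨m / 2, by omega⟩
  have h : ((2 * k + 1) / (3 * k + 2) : ℚ) ∈ collatzSemigroup :=
    Subsemigroup.subset_closure (Or.inr ⟨k, rfl⟩)
  convert mul_mem h inv_two_mem_collatzSemigroup using 1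
  have h1 : (3 * k + 2 : ℚ) ≠ 0 := by positivity
  have h2 : (3 * ((2 * k + 1 : ℕ) : ℚ) + 1) ≠ 0 := by positivity
  push_cast at h2 ⊢
  field_simp
  ring

theorem mem_collatzSemigroup_of_forward {n c k x y : ℕ} (hodd : c * n % 2 = 1)
    (h : 3 * (c * n) + 1 = 2 ^ k * (x * y)) (hc : (c : ℚ)⁻¹ ∈ collatzSemigroup)
    (hx : (x : ℚ) ∈ collatzSemigroup) (hy : (y : ℚ) ∈ collatzSemigroup) :
    (n : ℚ) ∈ collatzSemigroup := by
  have hc0 : (c : ℚ) ≠ 0 := by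
    rintro hc0
    simp [Nat.cast_eq_zero.mp hc0] at hodd
  have h' : (3 * ((c * n : ℕ) : ℚ) + 1) = 2 ^ k * (x * y) := by exact_mod_cast h
  have h0 : (3 * ((c * n : ℕ) : ℚ) + 1) ≠ 0 := by positivity
  convert mul_mem (mul_mem (odd_div_mem_collatzSemigroup hodd) hc)
    (mul_mem (two_pow_mem_collatzSemigroup k) (mul_mem hx hy)) using 1
  rw [← h']
  push_cast at h0 ⊢
  field_simp

theorem inv_mem_collatzSemigroup_of_backward {n c x y : ℕ} (hodd : x * y % 2 = 1)
    (h : 2 * (c * n) = 3 * (x * y) + 1) (hc : (c : ℚ) ∈ collatzSemigroup)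
    (hx : (x : ℚ)⁻¹ ∈ collatzSemigroup) (hy : (y : ℚ)⁻¹ ∈ collatzSemigroup) :
    (n : ℚ)⁻¹ ∈ collatzSemigroup := by
  have h' : (2 * (c * n) : ℚ) = 3 * ((x * y : ℕ) : ℚ) + 1 := by exact_mod_cast h
  have hxy : x * y ≠ 0 := by
    intro h0
    simp [h0] at hodd
  have hx0 : (x : ℚ) ≠ 0 := by exact_mod_cast left_ne_zero_of_mul hxy
  have hy0 : (y : ℚ) ≠ 0 := by exact_mod_cast right_ne_zero_of_mul hxy
  have hcn : c * n ≠ 0 := by omega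
  have hc0 : (c : ℚ) ≠ 0 := by exact_mod_cast left_ne_zero_of_mul hcn
  have hn0 : (n : ℚ) ≠ 0 := by exact_mod_cast right_ne_zero_of_mul hcn
  convert mul_mem (mul_mem (mul_mem two_mem_collatzSemigroup hc)
    (odd_div_mem_collatzSemigroup hodd)) (mul_mem hx hy) using 1
  rw [← h']
  push_cast
  field_simp

theorem five_mem_collatzSemigroup : ((5 : ℕ) : ℚ) ∈ collatzSemigroup :=
  mem_collatzSemigroup_of_forward (c := 1) (k := 4) (x := 1) (y := 1) rfl rfl
    (by simpa using one_mem_collatzSemigroup) (by simpa using one_mem_collatzSemigroup)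
    (by simpa using one_mem_collatzSemigroup)

theorem mem_collatzSemigroup_of_collatz {n k x : ℕ} (hodd : n % 2 = 1)
    (h : 3 * n + 1 = 2 ^ k * x) (hx : (x : ℚ) ∈ collatzSemigroup) :
    (n : ℚ) ∈ collatzSemigroup :=
  mem_collatzSemigroup_of_forward (c := 1) (k := k) (x := x) (y := 1) (by simpa using hodd)
    (by simpa using h) (by simpa using one_mem_collatzSemigroup) hx
    (by simpa using one_mem_collatzSemigroup)

theorem three_mem_collatzSemigroup : ((3 : ℕ) : ℚ) ∈ collatzSemigroup :=
  mem_collatzSemigroup_of_collatz (k := 1) rfl rfl five_mem_collatzSemigroup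

theorem eleven_mem_collatzSemigroup : ((11 : ℕ) : ℚ) ∈ collatzSemigroup :=
  mem_collatzSemigroup_of_collatz (k := 1) (x := 17) rfl rfl <|
    mem_collatzSemigroup_of_collatz (k := 2) (x := 13) rfl rfl <|
      mem_collatzSemigroup_of_collatz (k := 3) rfl rfl five_mem_collatzSemigroup

theorem seven_mem_collatzSemigroup : ((7 : ℕ) : ℚ) ∈ collatzSemigroup :=
  mem_collatzSemigroup_of_collatz (k := 1) rfl rfl eleven_mem_collatzSemigroup

theorem inv_five_mem_collatzSemigroup : ((5 : ℕ) : ℚ)⁻¹ ∈ collatzSemigroup := by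
  have g (m : ℕ) (hm : m % 2 = 1) := odd_div_mem_collatzSemigroup hm
  have h := mul_mem (two_pow_mem_collatzSemigroup 9) (mul_mem (g 43 rfl) (mul_mem (g 143 rfl)
    (mul_mem (g 7 rfl) (mul_mem (g 65 rfl) (mul_mem (g 17 rfl) (mul_mem (g 11 rfl) (g 7 rfl)))))))
  norm_num at h ⊢
  exact h

theorem inv_seven_mem_collatzSemigroup : ((7 : ℕ) : ℚ)⁻¹ ∈ collatzSemigroup := by
  have g (m : ℕ) (hm : m % 2 = 1) := odd_div_mem_collatzSemigroup hm
  have h := mul_mem (mul_mem (two_pow_mem_collatzSemigroup 6) inv_five_mem_collatzSemigroup)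
    (mul_mem (g 65 rfl) (mul_mem (g 17 rfl) (mul_mem (g 11 rfl) (g 7 rfl))))
  norm_num at h ⊢
  exact h

theorem natCast_mem_and_inv_mem_collatzSemigroup (n : ℕ) (hn : 0 < n) :
    (n : ℚ) ∈ collatzSemigroup ∧ (n % 3 ≠ 0 → (n : ℚ)⁻¹ ∈ collatzSemigroup) := by
  induction n using Nat.strong_induction_on with
  | _ n ih =>
  have mem (m : ℕ) (h0 : 0 < m) (hm : m < n) : (m : ℚ) ∈ collatzSemigroup := (ih m hm h0).1
  have inv_mem (m : ℕ) (h6 : m % 6 = 1 ∨ m % 6 = 5) (hm : m < n) :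
      (m : ℚ)⁻¹ ∈ collatzSemigroup := (ih m hm (by omega)).2 (by omega)
  have one_mem : ((1 : ℕ) : ℚ) ∈ collatzSemigroup := by simpa using one_mem_collatzSemigroup
  have inv_one_mem : ((1 : ℕ) : ℚ)⁻¹ ∈ collatzSemigroup := by
    simpa using one_mem_collatzSemigroup
  rcases Nat.even_or_odd' n with ⟨m, rfl | hodd⟩
  · obtain ⟨h, hinv⟩ := ih m (by omega) (by omega)
    push_cast
    refine ⟨mul_mem two_mem_collatzSemigroup h, fun h3 => ?_⟩
    rw [mul_inv]
    exact mul_mem inv_two_mem_collatzSemigroup (hinv (by omega))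
  by_cases h3 : n % 3 = 0
  · refine ⟨?_, fun h => absurd h3 h⟩
    obtain ⟨t, rfl⟩ : ∃ t, n = 3 * t := ⟨n / 3, by omega⟩
    rw [Nat.cast_mul]
    exact mul_mem three_mem_collatzSemigroup (mem t (by omega) (by omega))
  have h6 : n % 6 = 1 ∨ n % 6 = 5 := by omega
  have odd_mul {a b : ℕ} (ha : a % 6 = 1 ∨ a % 6 = 5) (hb : b % 6 = 1 ∨ b % 6 = 5) :
      a * b % 2 = 1 :=
    Nat.odd_iff.mp ((Nat.odd_iff.mpr (by omega)).mul (Nat.odd_iff.mpr (by omega)))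
  refine ⟨?_, fun _ => ?_⟩
  · by_cases h1 : n = 1
    · exact h1 ▸ one_mem
    by_cases h7 : n = 7
    · exact h7 ▸ seven_mem_collatzSemigroup
    by_cases h11 : n = 11
    · exact h11 ▸ eleven_mem_collatzSemigroup
    obtain ⟨k, x, y, c, h, hx0, hx, hy0, hy, hc, hc6⟩ :=
      exists_forward_factorization h6 h1 h7 h11
    exact mem_collatzSemigroup_of_forward (odd_mul hc6 h6) h (inv_mem c hc6 hc) (mem x hx0 hx)
      (mem y hy0 hy)
  · by_cases h1 : n = 1
    · exact h1 ▸ inv_one_mem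
    by_cases h5 : n = 5
    · exact h5 ▸ inv_five_mem_collatzSemigroup
    by_cases h7 : n = 7
    · exact h7 ▸ inv_seven_mem_collatzSemigroup
    by_cases h13 : n = 13
    · subst h13
      have inv19 : ((19 : ℕ) : ℚ)⁻¹ ∈ collatzSemigroup :=
        inv_mem_collatzSemigroup_of_backward (c := 2) (x := 5) (y := 5) rfl rfl
          (mem 2 (by omega) (by omega)) inv_five_mem_collatzSemigroup inv_five_mem_collatzSemigroup
      exact inv_mem_collatzSemigroup_of_backward (c := 11) (x := 5) (y := 19) rfl rfl
        eleven_mem_collatzSemigroup inv_five_mem_collatzSemigroup inv19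
    by_cases h23 : n = 23
    · subst h23
      have h31 : ((31 : ℕ) : ℚ) ∈ collatzSemigroup :=
        mem_collatzSemigroup_of_forward (c := 11) (k := 2) rfl rfl (inv_mem 11 (by omega) (by omega))
          (mem 16 (by omega) (by omega)) (mem 16 (by omega) (by omega))
      have inv25 : ((25 : ℕ) : ℚ)⁻¹ ∈ collatzSemigroup := by
        have h := mul_mem inv_five_mem_collatzSemigroup inv_five_mem_collatzSemigroup
        norm_num at h ⊢
        exact h
      exact inv_mem_collatzSemigroup_of_backward (c := 31) (x := 25) (y := 19) rfl rfl h31 inv25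
        (inv_mem 19 (by omega) (by omega))
    obtain ⟨x, y, c, h, hx, hx6, hy, hy6, hc0, hc⟩ :=
      exists_backward_factorization h6 h1 h5 h7 h13 h23
    exact inv_mem_collatzSemigroup_of_backward (odd_mul hx6 hy6) h (mem c hc0 hc)
      (inv_mem x hx6 hx) (inv_mem y hy6 hy)

theorem posInt_mem_collatzSemigroup (n : ℕ) (hn : 0 < n) :
    (n : ℚ) ∈ collatzSemigroup :=
  (natCast_mem_and_inv_mem_collatzSemigroup n hn).1
end

section
/- The positive integers contained in the wild semigroup W are exactly the positive integers not divisible by 3. -/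
/-- Generators of the wild semigroup: 1/2 together with (3k+2)/(2k+1) for k ≥ 0. -/
def wildGens : Set ℚ := {1/2} ∪ {q : ℚ | ∃ k : ℕ, q = (3 * k + 2) / (2 * k + 1)}

def wildSemigroup : Subsemigroup ℚ := Subsemigroup.closure wildGens

/-- The inverse of `n` is in the wild semigroup, and so is `n` itself unless `3 ∣ n`. -/
def IsTame (n : ℕ) : Prop :=
  (n : ℚ)⁻¹ ∈ wildSemigroup ∧ (¬ 3 ∣ n → (n : ℚ) ∈ wildSemigroup)

theorem half_mem_wildSemigroup : (1 / 2 : ℚ) ∈ wildSemigroup :=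
  Subsemigroup.subset_closure (Or.inl rfl)

theorem div_mem_wildSemigroup (k : ℕ) : ((3 * k + 2) / (2 * k + 1) : ℚ) ∈ wildSemigroup :=
  Subsemigroup.subset_closure (Or.inr ⟨k, rfl⟩)

theorem two_mem_wildSemigroup : (2 : ℚ) ∈ wildSemigroup := by
  simpa using div_mem_wildSemigroup 0

theorem div_mem_wildSemigroup_of_eq {a b : ℕ} (h : 3 * b + 1 = 2 * a) :
    (a / b : ℚ) ∈ wildSemigroup := by
  obtain ⟨k, rfl⟩ : ∃ k, b = 2 * k + 1 := ⟨b / 2, by omega⟩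
  obtain rfl : a = 3 * k + 2 := by omega
  simpa using div_mem_wildSemigroup k

theorem exists_eq_div_of_mem_wildSemigroup {q : ℚ} (hq : q ∈ wildSemigroup) :
    ∃ a b : ℕ, ¬ 3 ∣ a ∧ b ≠ 0 ∧ q = a / b := by
  induction hq using Subsemigroup.closure_induction with
  | mem x hx =>
    rcases hx with rfl | ⟨k, rfl⟩
    · exact ⟨1, 2, by norm_num, by norm_num, by norm_num⟩
    · exact ⟨3 * k + 2, 2 * k + 1, by omega, by omega, by push_cast; rfl⟩
  | mul x y _ _ hx hy =>
    obtain ⟨a, b, ha, hb, rfl⟩ := hx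
    obtain ⟨c, d, hc, hd, rfl⟩ := hy
    refine ⟨a * c, b * d, Nat.prime_three.not_dvd_mul ha hc, mul_ne_zero hb hd, ?_⟩
    push_cast
    rw [div_mul_div_comm]

theorem IsTame.mul {a b : ℕ} (ha : IsTame a) (hb : IsTame b) : IsTame (a * b) := by
  refine ⟨?_, fun h => ?_⟩
  · push_cast
    rw [mul_inv]
    exact mul_mem ha.1 hb.1
  · push_cast
    exact mul_mem (ha.2 fun h' => h (h'.mul_right b)) (hb.2 fun h' => h (h'.mul_left a))

theorem inv_mem_of_eq {n s z : ℕ} (h : 3 * (n * s) + 1 = 2 * z) (hs : IsTame s) (hs3 : ¬ 3 ∣ s)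
    (hz : IsTame z) : (n : ℚ)⁻¹ ∈ wildSemigroup := by
  have hns : (n : ℚ) * s ≠ 0 := by
    have : n * s ≠ 0 := by omega
    exact_mod_cast this
  have hz0 : (z : ℚ) ≠ 0 := by
    have : z ≠ 0 := by omega
    exact_mod_cast this
  have key := mul_mem (mul_mem (div_mem_wildSemigroup_of_eq h) (hs.2 hs3)) hz.1
  have hn0 : (n : ℚ) ≠ 0 := left_ne_zero_of_mul hns
  have hs0 : (s : ℚ) ≠ 0 := right_ne_zero_of_mul hns
  convert key using 1
  push_cast
  field_simp

theorem mem_of_eq {n s t : ℕ} (h : 3 * t + 1 = 2 * (n * s)) (hs : IsTame s) (ht : IsTame t)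
    (ht3 : ¬ 3 ∣ t) : (n : ℚ) ∈ wildSemigroup := by
  have hs0 : (s : ℚ) ≠ 0 := by
    rintro h0
    rw [Nat.cast_eq_zero.mp h0] at h
    omega
  have ht0 : (t : ℚ) ≠ 0 := by
    rintro h0
    rw [Nat.cast_eq_zero.mp h0] at h
    omega
  have key := mul_mem (mul_mem (div_mem_wildSemigroup_of_eq h) hs.1) (ht.2 ht3)
  convert key using 1
  push_cast
  field_simp

theorem inv_mem_of_step {n : ℕ} (ih : ∀ m, 0 < m → m < n → IsTame m) (k m c x y : ℕ)
    (h : 3 * (n * (k * m)) + 1 = 2 * (c * (x * y)))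
    (hb : (0 < k ∧ k < n ∧ 0 < m ∧ m < n ∧ ¬ 3 ∣ k ∧ ¬ 3 ∣ m) ∧
      0 < c ∧ c < n ∧ 0 < x ∧ x < n ∧ 0 < y ∧ y < n) : (n : ℚ)⁻¹ ∈ wildSemigroup := by
  obtain ⟨⟨hk, hkn, hm, hmn, hk3, hm3⟩, hc, hcn, hx, hxn, hy, hyn⟩ := hb
  exact inv_mem_of_eq h ((ih k hk hkn).mul (ih m hm hmn)) (Nat.prime_three.not_dvd_mul hk3 hm3)
    ((ih c hc hcn).mul ((ih x hx hxn).mul (ih y hy hyn)))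

theorem mem_of_step {n : ℕ} (ih : ∀ m, 0 < m → m < n → IsTame m) (k m c x y : ℕ)
    (h : 3 * (c * (x * y)) + 1 = 2 * (n * (k * m)))
    (hb : (0 < k ∧ k < n ∧ 0 < m ∧ m < n) ∧
      (0 < c ∧ c < n ∧ 0 < x ∧ x < n ∧ 0 < y ∧ y < n) ∧ ¬ 3 ∣ c ∧ ¬ 3 ∣ x ∧ ¬ 3 ∣ y) :
    (n : ℚ) ∈ wildSemigroup := by
  obtain ⟨⟨hk, hkn, hm, hmn⟩, ⟨hc, hcn, hx, hxn, hy, hyn⟩, hc3, hx3, hy3⟩ := hb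
  exact mem_of_eq h ((ih k hk hkn).mul (ih m hm hmn))
    ((ih c hc hcn).mul ((ih x hx hxn).mul (ih y hy hyn)))
    (Nat.prime_three.not_dvd_mul hc3 (Nat.prime_three.not_dvd_mul hx3 hy3))

theorem isTame_one : IsTame 1 := by
  have h : (1 : ℚ) ∈ wildSemigroup := by
    simpa using mul_mem half_mem_wildSemigroup two_mem_wildSemigroup
  exact ⟨by simpa using h, fun _ => by simpa using h⟩

theorem isTame_two : IsTame 2 :=
  ⟨by simpa using half_mem_wildSemigroup, fun _ => by exact_mod_cast two_mem_wildSemigroup⟩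

theorem half_pow_mul_mem {q : ℚ} (hq : q ∈ wildSemigroup) (i : ℕ) :
    (1 / 2) ^ i * q ∈ wildSemigroup := by
  induction i with
  | zero => simpa using hq
  | succ i ih =>
    rw [pow_succ', mul_assoc]
    exact mul_mem half_mem_wildSemigroup ih

theorem isTame_five : IsTame 5 := by
  have h₁ : (28 / 5 : ℚ) ∈ wildSemigroup := by
    convert mul_mem (mul_mem (div_mem_wildSemigroup 32) (div_mem_wildSemigroup 8))
      (mul_mem (div_mem_wildSemigroup 5) (div_mem_wildSemigroup 3)) using 1
    norm_num
  have h₂ : (17 / 7 : ℚ) ∈ wildSemigroup := by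
    convert mul_mem (div_mem_wildSemigroup 5) (div_mem_wildSemigroup 3) using 1
    norm_num
  constructor
  · convert half_pow_mul_mem (div_mem_wildSemigroup 2) 3 using 1
    norm_num
  · intro _
    convert half_pow_mul_mem (mul_mem (mul_mem (div_mem_wildSemigroup 416) h₂)
      (mul_mem h₁ (mul_mem h₁ h₁))) 7 using 1
    norm_num

theorem isTame_three : IsTame 3 := by
  refine ⟨?_, fun h => (h dvd_rfl).elim⟩
  convert mul_mem (div_mem_wildSemigroup 1) isTame_five.1 using 1
  norm_num

theorem isTame_seven : IsTame 7 := by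
  constructor
  · convert half_pow_mul_mem (mul_mem (mul_mem (mul_mem (div_mem_wildSemigroup 3)
      (div_mem_wildSemigroup 5)) (mul_mem (div_mem_wildSemigroup 8) (div_mem_wildSemigroup 6)))
      isTame_five.1) 3 using 1
    norm_num
  · intro _
    convert half_pow_mul_mem (mul_mem (mul_mem (mul_mem (div_mem_wildSemigroup 32)
      (div_mem_wildSemigroup 8)) (mul_mem (div_mem_wildSemigroup 5) (div_mem_wildSemigroup 3)))
      (isTame_five.2 (by norm_num))) 2 using 1
    norm_num

theorem isTame_eleven : IsTame 11 := by
  constructor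
  · convert half_pow_mul_mem (mul_mem (mul_mem (div_mem_wildSemigroup 5)
      (mul_mem (div_mem_wildSemigroup 8) (div_mem_wildSemigroup 6))) isTame_five.1) 3 using 1
    norm_num
  · intro _
    convert mul_mem (div_mem_wildSemigroup 3) (isTame_seven.2 (by norm_num)) using 1
    norm_num

theorem isTame_of_dvd {n p : ℕ} (ih : ∀ m, 0 < m → m < n → IsTame m) (hn : p < n) (hp : 1 < p)
    (h : p ∣ n) : IsTame n := by
  obtain ⟨m, rfl⟩ := h
  exact (ih p (by omega) hn).mul (ih m (Nat.pos_of_ne_zero (by rintro rfl; omega)) (by nlinarith))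

set_option synthInstance.maxSize 10000 in
theorem inv_mem_cases {n : ℕ} (h2 : n % 2 ≠ 0) (h3 : n % 3 ≠ 0) (h5 : n % 5 ≠ 0) :
      n % 12 = 1 ∨ n % 12 = 5 ∨ n % 18 = 1 ∨ n % 18 = 5 ∨ n % 18 = 13 ∨ n % 18 = 17 ∨
      n % 30 = 13 ∨ n % 30 = 23 ∨ n % 60 = 59 ∨ n % 72 = 47 ∨ n % 90 = 47 ∨ n % 108 = 43 ∨
      n % 108 = 79 ∨ n % 144 = 115 ∨ n % 216 = 7 ∨ n % 216 = 83 ∨ n % 216 = 155 ∨ n % 270 = 11 ∨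
      n % 270 = 61 ∨ n % 270 = 169 ∨ n % 360 = 187 ∨ n % 432 = 227 := by
  have key : ∀ n < 2160, n % 2 ≠ 0 → n % 3 ≠ 0 → n % 5 ≠ 0 →
      n % 12 = 1 ∨ n % 12 = 5 ∨ n % 18 = 1 ∨ n % 18 = 5 ∨ n % 18 = 13 ∨ n % 18 = 17 ∨
      n % 30 = 13 ∨ n % 30 = 23 ∨ n % 60 = 59 ∨ n % 72 = 47 ∨ n % 90 = 47 ∨ n % 108 = 43 ∨
      n % 108 = 79 ∨ n % 144 = 115 ∨ n % 216 = 7 ∨ n % 216 = 83 ∨ n % 216 = 155 ∨ n % 270 = 11 ∨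
      n % 270 = 61 ∨ n % 270 = 169 ∨ n % 360 = 187 ∨ n % 432 = 227 := by
    decide +kernel
  have h := key (n % 2160) (Nat.mod_lt _ (by norm_num))
  simp only [Nat.mod_mod_of_dvd, Nat.reduceDvd] at h
  exact h h2 h3 h5

theorem inv_mem_of_coprime {n : ℕ} (ih : ∀ m, 0 < m → m < n → IsTame m) (hn : 12 ≤ n)
    (h2 : n % 2 ≠ 0) (h3 : n % 3 ≠ 0) (h5 : n % 5 ≠ 0) : (n : ℚ)⁻¹ ∈ wildSemigroup := by
  rcases inv_mem_cases h2 h3 h5 with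
    h | h | h | h | h | h | h | h | h | h | h | h | h | h | h | h | h | h | h | h | h | h
  · obtain ⟨q, rfl⟩ : ∃ q, n = 12 * q + 13 := ⟨(n - 13) / 12, by omega⟩
    exact inv_mem_of_step ih 1 1 2 1 (9 * q + 10) (by ring) (by omega)
  · obtain ⟨q, rfl⟩ : ∃ q, n = 12 * q + 5 := ⟨(n - 5) / 12, by omega⟩
    exact inv_mem_of_step ih 1 1 2 1 (9 * q + 4) (by ring) (by omega)
  · obtain ⟨q, rfl⟩ : ∃ q, n = 18 * q + 19 := ⟨(n - 19) / 18, by omega⟩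
    exact inv_mem_of_step ih 1 (6 * q + 7) 2 (9 * q + 10) (9 * q + 10) (by ring) (by omega)
  · obtain ⟨q, rfl⟩ : ∃ q, n = 18 * q + 5 := ⟨(n - 5) / 18, by omega⟩
    exact inv_mem_of_step ih 1 (6 * q + 1) 2 (9 * q + 2) (9 * q + 2) (by ring) (by omega)
  · obtain ⟨q, rfl⟩ : ∃ q, n = 18 * q + 13 := ⟨(n - 13) / 18, by omega⟩
    exact inv_mem_of_step ih 1 (6 * q + 5) 2 (9 * q + 7) (9 * q + 7) (by ring) (by omega)
  · obtain ⟨q, rfl⟩ : ∃ q, n = 18 * q + 17 := ⟨(n - 17) / 18, by omega⟩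
    exact inv_mem_of_step ih 1 (6 * q + 5) 2 (9 * q + 8) (9 * q + 8) (by ring) (by omega)
  · obtain ⟨q, rfl⟩ : ∃ q, n = 30 * q + 13 := ⟨(n - 13) / 30, by omega⟩
    exact inv_mem_of_step ih 1 1 5 1 (9 * q + 4) (by ring) (by omega)
  · obtain ⟨q, rfl⟩ : ∃ q, n = 30 * q + 23 := ⟨(n - 23) / 30, by omega⟩
    exact inv_mem_of_step ih 1 1 5 1 (9 * q + 7) (by ring) (by omega)
  · obtain ⟨q, rfl⟩ : ∃ q, n = 60 * q + 59 := ⟨(n - 59) / 60, by omega⟩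
    exact inv_mem_of_step ih 5 (36 * q + 35) 8 (45 * q + 44) (45 * q + 44) (by ring) (by omega)
  · obtain ⟨q, rfl⟩ : ∃ q, n = 72 * q + 47 := ⟨(n - 47) / 72, by omega⟩
    exact inv_mem_of_step ih 1 (42 * q + 25) 1 (72 * q + 43) (63 * q + 41) (by ring) (by omega)
  · obtain ⟨q, rfl⟩ : ∃ q, n = 90 * q + 47 := ⟨(n - 47) / 90, by omega⟩
    exact inv_mem_of_step ih 1 (12 * q + 7) 1 (45 * q + 26) (36 * q + 19) (by ring) (by omega)
  · obtain ⟨q, rfl⟩ : ∃ q, n = 108 * q + 43 := ⟨(n - 43) / 108, by omega⟩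
    exact inv_mem_of_step ih 1 (84 * q + 31) 8 (27 * q + 10) (63 * q + 25) (by ring) (by omega)
  · obtain ⟨q, rfl⟩ : ∃ q, n = 108 * q + 79 := ⟨(n - 79) / 108, by omega⟩
    exact inv_mem_of_step ih 1 (84 * q + 59) 8 (27 * q + 19) (63 * q + 46) (by ring) (by omega)
  · obtain ⟨q, rfl⟩ : ∃ q, n = 144 * q + 115 := ⟨(n - 115) / 144, by omega⟩
    exact inv_mem_of_step ih 1 (66 * q + 49) 1 (144 * q + 107) (99 * q + 79) (by ring) (by omega)
  · obtain ⟨q, rfl⟩ : ∃ q, n = 216 * q + 223 := ⟨(n - 223) / 216, by omega⟩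
    exact inv_mem_of_step ih 1 (42 * q + 41) 1 (216 * q + 211) (63 * q + 65) (by ring) (by omega)
  · obtain ⟨q, rfl⟩ : ∃ q, n = 216 * q + 83 := ⟨(n - 83) / 216, by omega⟩
    exact inv_mem_of_step ih 1 (42 * q + 17) 1 (72 * q + 29) (189 * q + 73) (by ring) (by omega)
  · obtain ⟨q, rfl⟩ : ∃ q, n = 216 * q + 155 := ⟨(n - 155) / 216, by omega⟩
    exact inv_mem_of_step ih 1 (42 * q + 31) 1 (72 * q + 53) (189 * q + 136) (by ring) (by omega)
  · obtain ⟨q, rfl⟩ : ∃ q, n = 270 * q + 281 := ⟨(n - 281) / 270, by omega⟩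
    exact inv_mem_of_step ih 1 (66 * q + 65) 2 (135 * q + 133) (99 * q + 103) (by ring) (by omega)
  · obtain ⟨q, rfl⟩ : ∃ q, n = 270 * q + 61 := ⟨(n - 61) / 270, by omega⟩
    exact inv_mem_of_step ih 1 (6 * q + 1) 2 (9 * q + 2) (135 * q + 23) (by ring) (by omega)
  · obtain ⟨q, rfl⟩ : ∃ q, n = 270 * q + 169 := ⟨(n - 169) / 270, by omega⟩
    exact inv_mem_of_step ih 1 (60 * q + 37) 5 (45 * q + 28) (108 * q + 67) (by ring) (by omega)
  · obtain ⟨q, rfl⟩ : ∃ q, n = 360 * q + 187 := ⟨(n - 187) / 360, by omega⟩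
    exact inv_mem_of_step ih 1 (84 * q + 43) 2 (72 * q + 37) (315 * q + 163) (by ring) (by omega)
  · obtain ⟨q, rfl⟩ : ∃ q, n = 432 * q + 227 := ⟨(n - 227) / 432, by omega⟩
    exact inv_mem_of_step ih 1 (66 * q + 31) 1 (432 * q + 203) (99 * q + 52) (by ring) (by omega)

set_option synthInstance.maxSize 10000 in
theorem mem_cases {n : ℕ} (h2 : n % 2 ≠ 0) (h3 : n % 3 ≠ 0) (h5 : n % 5 ≠ 0) :
      n % 18 = 11 ∨ n % 18 = 17 ∨ n % 72 = 1 ∨ n % 72 = 13 ∨ n % 72 = 19 ∨ n % 72 = 25 ∨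
      n % 72 = 37 ∨ n % 72 = 43 ∨ n % 72 = 59 ∨ n % 90 = 1 ∨ n % 90 = 19 ∨ n % 90 = 31 ∨
      n % 90 = 49 ∨ n % 90 = 59 ∨ n % 90 = 77 ∨ n % 108 = 25 ∨ n % 108 = 61 ∨ n % 108 = 97 ∨
      n % 144 = 133 ∨ n % 180 = 7 ∨ n % 180 = 23 ∨ n % 180 = 37 ∨ n % 180 = 41 ∨ n % 180 = 67 ∨
      n % 180 = 103 ∨ n % 180 = 113 ∨ n % 180 = 131 ∨ n % 180 = 151 ∨ n % 180 = 157 ∨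
      n % 180 = 163 ∨ n % 216 = 7 ∨ n % 216 = 79 ∨ n % 270 = 43 ∨ n % 360 = 127 ∨ n % 360 = 193 ∨
      n % 540 = 259 := by
  have key : ∀ n < 2160, n % 2 ≠ 0 → n % 3 ≠ 0 → n % 5 ≠ 0 →
      n % 18 = 11 ∨ n % 18 = 17 ∨ n % 72 = 1 ∨ n % 72 = 13 ∨ n % 72 = 19 ∨ n % 72 = 25 ∨
      n % 72 = 37 ∨ n % 72 = 43 ∨ n % 72 = 59 ∨ n % 90 = 1 ∨ n % 90 = 19 ∨ n % 90 = 31 ∨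
      n % 90 = 49 ∨ n % 90 = 59 ∨ n % 90 = 77 ∨ n % 108 = 25 ∨ n % 108 = 61 ∨ n % 108 = 97 ∨
      n % 144 = 133 ∨ n % 180 = 7 ∨ n % 180 = 23 ∨ n % 180 = 37 ∨ n % 180 = 41 ∨ n % 180 = 67 ∨
      n % 180 = 103 ∨ n % 180 = 113 ∨ n % 180 = 131 ∨ n % 180 = 151 ∨ n % 180 = 157 ∨
      n % 180 = 163 ∨ n % 216 = 7 ∨ n % 216 = 79 ∨ n % 270 = 43 ∨ n % 360 = 127 ∨ n % 360 = 193 ∨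
      n % 540 = 259 := by
    decide +kernel
  have h := key (n % 2160) (Nat.mod_lt _ (by norm_num))
  simp only [Nat.mod_mod_of_dvd, Nat.reduceDvd] at h
  exact h h2 h3 h5

theorem mem_of_coprime {n : ℕ} (ih : ∀ m, 0 < m → m < n → IsTame m) (hn : 12 ≤ n)
    (h2 : n % 2 ≠ 0) (h3 : n % 3 ≠ 0) (h5 : n % 5 ≠ 0) : (n : ℚ) ∈ wildSemigroup := by
  rcases mem_cases h2 h3 h5 with
    h | h | h | h | h | h | h | h | h | h | h | h | h | h | h | h | h | h | h | h | h | h | h |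
    h | h | h | h | h | h | h | h | h | h | h | h | h
  · obtain ⟨q, rfl⟩ : ∃ q, n = 18 * q + 11 := ⟨(n - 11) / 18, by omega⟩
    exact mem_of_step ih 1 1 1 1 (12 * q + 7) (by ring) (by omega)
  · obtain ⟨q, rfl⟩ : ∃ q, n = 18 * q + 17 := ⟨(n - 17) / 18, by omega⟩
    exact mem_of_step ih 1 1 1 1 (12 * q + 11) (by ring) (by omega)
  · obtain ⟨q, rfl⟩ : ∃ q, n = 72 * q + 73 := ⟨(n - 73) / 72, by omega⟩
    exact mem_of_step ih 1 (27 * q + 26) 1 (24 * q + 23) (54 * q + 55) (by ring) (by omega)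
  · obtain ⟨q, rfl⟩ : ∃ q, n = 72 * q + 13 := ⟨(n - 13) / 72, by omega⟩
    exact mem_of_step ih 2 (45 * q + 7) 1 (72 * q + 11) (60 * q + 11) (by ring) (by omega)
  · obtain ⟨q, rfl⟩ : ∃ q, n = 72 * q + 19 := ⟨(n - 19) / 72, by omega⟩
    exact mem_of_step ih 1 (9 * q + 2) 1 (18 * q + 5) (24 * q + 5) (by ring) (by omega)
  · obtain ⟨q, rfl⟩ : ∃ q, n = 72 * q + 25 := ⟨(n - 25) / 72, by omega⟩
    exact mem_of_step ih 1 (27 * q + 8) 1 (24 * q + 7) (54 * q + 19) (by ring) (by omega)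
  · obtain ⟨q, rfl⟩ : ∃ q, n = 72 * q + 37 := ⟨(n - 37) / 72, by omega⟩
    exact mem_of_step ih 2 (45 * q + 22) 1 (72 * q + 35) (60 * q + 31) (by ring) (by omega)
  · obtain ⟨q, rfl⟩ : ∃ q, n = 72 * q + 43 := ⟨(n - 43) / 72, by omega⟩
    exact mem_of_step ih 1 (9 * q + 5) 1 (18 * q + 11) (24 * q + 13) (by ring) (by omega)
  · obtain ⟨q, rfl⟩ : ∃ q, n = 72 * q + 59 := ⟨(n - 59) / 72, by omega⟩
    exact mem_of_step ih 1 (9 * q + 7) 1 (6 * q + 5) (72 * q + 55) (by ring) (by omega)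
  · obtain ⟨q, rfl⟩ : ∃ q, n = 90 * q + 91 := ⟨(n - 91) / 90, by omega⟩
    exact mem_of_step ih 1 (72 * q + 71) 1 (60 * q + 59) (72 * q + 73) (by ring) (by omega)
  · obtain ⟨q, rfl⟩ : ∃ q, n = 90 * q + 19 := ⟨(n - 19) / 90, by omega⟩
    exact mem_of_step ih 2 1 5 1 (24 * q + 5) (by ring) (by omega)
  · obtain ⟨q, rfl⟩ : ∃ q, n = 90 * q + 31 := ⟨(n - 31) / 90, by omega⟩
    exact mem_of_step ih 1 (72 * q + 23) 1 (60 * q + 19) (72 * q + 25) (by ring) (by omega)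
  · obtain ⟨q, rfl⟩ : ∃ q, n = 90 * q + 49 := ⟨(n - 49) / 90, by omega⟩
    exact mem_of_step ih 2 1 5 1 (24 * q + 13) (by ring) (by omega)
  · obtain ⟨q, rfl⟩ : ∃ q, n = 90 * q + 59 := ⟨(n - 59) / 90, by omega⟩
    exact mem_of_step ih 1 (72 * q + 49) 1 (60 * q + 41) (72 * q + 47) (by ring) (by omega)
  · obtain ⟨q, rfl⟩ : ∃ q, n = 90 * q + 77 := ⟨(n - 77) / 90, by omega⟩
    exact mem_of_step ih 4 1 5 1 (48 * q + 41) (by ring) (by omega)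
  · obtain ⟨q, rfl⟩ : ∃ q, n = 108 * q + 25 := ⟨(n - 25) / 108, by omega⟩
    exact mem_of_step ih 1 (45 * q + 8) 1 (108 * q + 19) (30 * q + 7) (by ring) (by omega)
  · obtain ⟨q, rfl⟩ : ∃ q, n = 108 * q + 61 := ⟨(n - 61) / 108, by omega⟩
    exact mem_of_step ih 1 (9 * q + 5) 1 (12 * q + 7) (54 * q + 29) (by ring) (by omega)
  · obtain ⟨q, rfl⟩ : ∃ q, n = 108 * q + 97 := ⟨(n - 97) / 108, by omega⟩
    exact mem_of_step ih 1 (9 * q + 8) 1 (12 * q + 11) (54 * q + 47) (by ring) (by omega)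
  · obtain ⟨q, rfl⟩ : ∃ q, n = 144 * q + 133 := ⟨(n - 133) / 144, by omega⟩
    exact mem_of_step ih 1 (45 * q + 44) 1 (48 * q + 47) (90 * q + 83) (by ring) (by omega)
  · obtain ⟨q, rfl⟩ : ∃ q, n = 180 * q + 187 := ⟨(n - 187) / 180, by omega⟩
    exact mem_of_step ih 1 (63 * q + 62) 1 (60 * q + 59) (126 * q + 131) (by ring) (by omega)
  · obtain ⟨q, rfl⟩ : ∃ q, n = 180 * q + 23 := ⟨(n - 23) / 180, by omega⟩
    exact mem_of_step ih 1 (135 * q + 16) 5 (60 * q + 7) (54 * q + 7) (by ring) (by omega)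
  · obtain ⟨q, rfl⟩ : ∃ q, n = 180 * q + 37 := ⟨(n - 37) / 180, by omega⟩
    exact mem_of_step ih 1 (135 * q + 29) 5 (60 * q + 13) (54 * q + 11) (by ring) (by omega)
  · obtain ⟨q, rfl⟩ : ∃ q, n = 180 * q + 41 := ⟨(n - 41) / 180, by omega⟩
    exact mem_of_step ih 1 (63 * q + 16) 1 (90 * q + 23) (84 * q + 19) (by ring) (by omega)
  · obtain ⟨q, rfl⟩ : ∃ q, n = 180 * q + 67 := ⟨(n - 67) / 180, by omega⟩
    exact mem_of_step ih 1 (63 * q + 20) 1 (60 * q + 19) (126 * q + 47) (by ring) (by omega)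
  · obtain ⟨q, rfl⟩ : ∃ q, n = 180 * q + 103 := ⟨(n - 103) / 180, by omega⟩
    exact mem_of_step ih 1 (9 * q + 5) 1 (12 * q + 7) (90 * q + 49) (by ring) (by omega)
  · obtain ⟨q, rfl⟩ : ∃ q, n = 180 * q + 113 := ⟨(n - 113) / 180, by omega⟩
    exact mem_of_step ih 1 (63 * q + 43) 1 (60 * q + 41) (126 * q + 79) (by ring) (by omega)
  · obtain ⟨q, rfl⟩ : ∃ q, n = 180 * q + 131 := ⟨(n - 131) / 180, by omega⟩
    exact mem_of_step ih 1 (9 * q + 7) 1 (18 * q + 13) (60 * q + 47) (by ring) (by omega)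
  · obtain ⟨q, rfl⟩ : ∃ q, n = 180 * q + 151 := ⟨(n - 151) / 180, by omega⟩
    exact mem_of_step ih 1 (135 * q + 113) 25 (6 * q + 5) (108 * q + 91) (by ring) (by omega)
  · obtain ⟨q, rfl⟩ : ∃ q, n = 180 * q + 157 := ⟨(n - 157) / 180, by omega⟩
    exact mem_of_step ih 1 (135 * q + 119) 5 (60 * q + 53) (54 * q + 47) (by ring) (by omega)
  · obtain ⟨q, rfl⟩ : ∃ q, n = 180 * q + 163 := ⟨(n - 163) / 180, by omega⟩
    exact mem_of_step ih 1 (9 * q + 8) 1 (12 * q + 11) (90 * q + 79) (by ring) (by omega)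
  · obtain ⟨q, rfl⟩ : ∃ q, n = 216 * q + 223 := ⟨(n - 223) / 216, by omega⟩
    exact mem_of_step ih 1 (45 * q + 44) 1 (216 * q + 211) (30 * q + 31) (by ring) (by omega)
  · obtain ⟨q, rfl⟩ : ∃ q, n = 216 * q + 79 := ⟨(n - 79) / 216, by omega⟩
    exact mem_of_step ih 1 (45 * q + 14) 1 (216 * q + 67) (30 * q + 11) (by ring) (by omega)
  · obtain ⟨q, rfl⟩ : ∃ q, n = 270 * q + 43 := ⟨(n - 43) / 270, by omega⟩
    exact mem_of_step ih 4 (180 * q + 29) 5 (120 * q + 19) (216 * q + 35) (by ring) (by omega)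
  · obtain ⟨q, rfl⟩ : ∃ q, n = 360 * q + 127 := ⟨(n - 127) / 360, by omega⟩
    exact mem_of_step ih 1 (27 * q + 11) 1 (120 * q + 49) (54 * q + 19) (by ring) (by omega)
  · obtain ⟨q, rfl⟩ : ∃ q, n = 360 * q + 193 := ⟨(n - 193) / 360, by omega⟩
    exact mem_of_step ih 1 (189 * q + 101) 1 (216 * q + 115) (210 * q + 113) (by ring) (by omega)
  · obtain ⟨q, rfl⟩ : ∃ q, n = 540 * q + 259 := ⟨(n - 259) / 540, by omega⟩
    exact mem_of_step ih 1 (315 * q + 152) 5 (60 * q + 29) (378 * q + 181) (by ring) (by omega)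

theorem isTame_of_pos {n : ℕ} (hn : 0 < n) : IsTame n := by
  induction n using Nat.strong_induction_on with
  | _ n ih =>
    have ih' : ∀ m, 0 < m → m < n → IsTame m := fun m hm hmn => ih m hmn hm
    rcases lt_or_ge n 12 with hlt | hge
    · interval_cases n
      · exact isTame_one
      · exact isTame_two
      · exact isTame_three
      · exact isTame_two.mul isTame_two
      · exact isTame_five
      · exact isTame_two.mul isTame_three
      · exact isTame_seven
      · exact isTame_two.mul (isTame_two.mul isTame_two)
      · exact isTame_three.mul isTame_three
      · exact isTame_two.mul isTame_five
      · exact isTame_eleven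
    by_cases h2 : n % 2 = 0
    · exact isTame_of_dvd ih' (by omega) one_lt_two (Nat.dvd_of_mod_eq_zero h2)
    by_cases h3 : n % 3 = 0
    · exact isTame_of_dvd ih' (by omega) (by norm_num) (Nat.dvd_of_mod_eq_zero h3)
    by_cases h5 : n % 5 = 0
    · exact isTame_of_dvd ih' (by omega) (by norm_num) (Nat.dvd_of_mod_eq_zero h5)
    exact ⟨inv_mem_of_coprime ih' hge h2 h3 h5, fun _ => mem_of_coprime ih' hge h2 h3 h5⟩

theorem wild_integers (n : ℕ) (hn : 0 < n) :
    (n : ℚ) ∈ wildSemigroup ↔ ¬ (3 ∣ n) := by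
  refine ⟨fun h hdvd => ?_, (isTame_of_pos hn).2⟩
  obtain ⟨a, b, ha, hb, hab⟩ := exists_eq_div_of_mem_wildSemigroup h
  rw [eq_div_iff (by exact_mod_cast hb)] at hab
  have hab' : n * b = a := by exact_mod_cast hab
  exact ha (hab' ▸ hdvd.mul_right b)
end
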